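/- Let v_θ and v_θ̃ be tanh feedforward neural networks with the same architecture of depth L ≥ 2, width W, input dimension n₀ ≤ W, and at most N_θ parameters in total, whose parameter vectors satisfy |θ|_{l^∞} ≤ B_θ, |θ̃|_{l^∞} ≤ B_θ with B_θ ≥ 1. Then for every x ∈ [−1, 1]^{n₀} and all coordinate indices i, j, |∂²v_θ/∂x_i∂x_j (x) − ∂²v_θ̃/∂x_i∂x_j (x)| ≤ 4 L² N_θ W^{3L−3} B_θ^{3L−3} |θ − θ̃|_{l^∞}. -/

import Mathlib

/-!
Second derivatives of the network satisfy an exact forward recursion. Write `s_l` for the `l`-th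
hidden layer, `P_v = A_l D_v s_l` and `Q = A_l D_v D_w s_l` for the derivatives of the
preactivation of layer `l + 1`. Since `tanh' = 1 - tanh²`, the chain rule gives

* `D_v s_{l+1} = (1 - s²) P_v`,
* `D_v D_w s_{l+1} = -2 s (1 - s²) P_v P_w + (1 - s²) Q`, with `s = s_{l+1}`,

and the Hessian of the output is the vector `Q` of the last layer. All nonlinearities are
polynomials in `s ∈ [-1, 1]`, so their Lipschitz constants are elementary. With `d` the parameter
distance, induction on `l` gives, for coordinate directions `v, w`,

* `|P_v| ≤ W^l B^(l+1)` and `|Q| ≤ l W^(2l) B^(2l+1)`,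
* preactivations differ by at most `2 (l+1) W^(l+1) B^l d`,
* the `P_v` differ by at most `2 (l+1)² W^(2l) B^(2l) d`,
* the `Q` differ by at most `4 (l+1)³ W^(3l) B^(3l) d`.

At `l = L - 1` the last bound is `4 L³ W^(3L-3) B^(3L-3) d`. If every hidden layer is nonempty, the
biases alone show `L ≤ Nθ`, which turns `L³` into `L² Nθ`. If some hidden layer is empty, the
network is constant in its input and both Hessians vanish.
-/

/-- The hidden-layer outputs of a feedforward neural network with activation `tanh`:
`tanhHidden n A b x 0 = x` is the input, and
`tanhHidden n A b x (l+1) = σ(Tˡ⁺¹(tanhHidden n A b x l))` with `σ = tanh` componentwise,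
where `Tˡ⁺¹(y) = A l · y + b l` (`0`-based parameter indexing). -/
noncomputable def tanhHidden (n : ℕ → ℕ)
    (A : ∀ l : ℕ, Fin (n (l + 1)) → Fin (n l) → ℝ)
    (b : ∀ l : ℕ, Fin (n (l + 1)) → ℝ)
    (x : Fin (n 0) → ℝ) : ∀ l : ℕ, Fin (n l) → ℝ
  | 0 => x
  | l + 1 => fun i =>
      Real.tanh (∑ j, A l i j * tanhHidden n A b x l j + b l i)

/-- The output of a depth-`L` feedforward `tanh` neural network with layer widths
`n 0, n 1, …, n L`: the affine map `T^L` (no activation) applied to the `(L-1)`-st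
hidden layer. -/
noncomputable def tanhNet (L : ℕ) (n : ℕ → ℕ)
    (A : ∀ l : ℕ, Fin (n (l + 1)) → Fin (n l) → ℝ)
    (b : ∀ l : ℕ, Fin (n (l + 1)) → ℝ)
    (x : Fin (n 0) → ℝ) : Fin (n (L - 1 + 1)) → ℝ :=
  fun i => ∑ j, A (L - 1) i j * tanhHidden n A b x (L - 1) j + b (L - 1) i

/-- The derivative of the hidden layers in direction `v`, given by its forward recursion. -/
noncomputable def hiddenDeriv (n : ℕ → ℕ)
    (A : ∀ l : ℕ, Fin (n (l + 1)) → Fin (n l) → ℝ)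
    (b : ∀ l : ℕ, Fin (n (l + 1)) → ℝ)
    (x v : Fin (n 0) → ℝ) : ∀ l : ℕ, Fin (n l) → ℝ
  | 0 => v
  | l + 1 => fun i =>
      (1 - tanhHidden n A b x (l + 1) i ^ 2) * dotProduct (A l i) (hiddenDeriv n A b x v l)

/-- The second derivative of the hidden layers in directions `v` and `w`, given by its forward
recursion. -/
noncomputable def hiddenHess (n : ℕ → ℕ)
    (A : ∀ l : ℕ, Fin (n (l + 1)) → Fin (n l) → ℝ)
    (b : ∀ l : ℕ, Fin (n (l + 1)) → ℝ)
    (x v w : Fin (n 0) → ℝ) : ∀ l : ℕ, Fin (n l) → ℝ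
  | 0 => 0
  | l + 1 => fun i =>
      -2 * tanhHidden n A b x (l + 1) i * (1 - tanhHidden n A b x (l + 1) i ^ 2)
          * dotProduct (A l i) (hiddenDeriv n A b x v l)
          * dotProduct (A l i) (hiddenDeriv n A b x w l)
        + (1 - tanhHidden n A b x (l + 1) i ^ 2)
          * dotProduct (A l i) (hiddenHess n A b x v w l)

/-! ### The hyperbolic tangent -/

lemma hasDerivAt_tanh' (x : ℝ) : HasDerivAt Real.tanh (1 - Real.tanh x ^ 2) x := by
  have hc : Real.cosh x ≠ 0 := (Real.cosh_pos x).ne'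
  have h := (Real.hasDerivAt_sinh x).div (Real.hasDerivAt_cosh x) hc
  have e : Real.tanh = Real.sinh / Real.cosh := by
    funext y; exact Real.tanh_eq_sinh_div_cosh y
  have e' : 1 - Real.tanh x ^ 2
      = (Real.cosh x * Real.cosh x - Real.sinh x * Real.sinh x) / Real.cosh x ^ 2 := by
    rw [Real.tanh_eq_sinh_div_cosh]
    field_simp
  rw [e', e]
  exact h

lemma abs_tanh_sub_le (x y : ℝ) : |Real.tanh x - Real.tanh y| ≤ |x - y| := by
  have h := Convex.norm_image_sub_le_of_norm_hasDerivWithin_le (f := Real.tanh)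
    (f' := fun x => 1 - Real.tanh x ^ 2) (C := 1) (s := Set.univ) (x := y) (y := x)
    (fun z _ => (hasDerivAt_tanh' z).hasDerivWithinAt)
    (fun z _ => by
      rw [Real.norm_eq_abs, abs_le]
      constructor <;> nlinarith [Real.tanh_sq_lt_one z, sq_nonneg (Real.tanh z)])
    convex_univ (Set.mem_univ _) (Set.mem_univ _)
  simpa [Real.norm_eq_abs] using h

/-! ### Differentiating the recursion -/

lemma differentiableAt_dotProduct {p q : ℕ} (a : Fin q → ℝ) {f : (Fin p → ℝ) → Fin q → ℝ}
    {x : Fin p → ℝ} (hf : ∀ j, DifferentiableAt ℝ (fun z => f z j) x) :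
    DifferentiableAt ℝ (fun z => dotProduct a (f z)) x := by
  unfold dotProduct
  fun_prop

lemma fderiv_dotProduct_apply {p q : ℕ} (a : Fin q → ℝ) {f : (Fin p → ℝ) → Fin q → ℝ}
    {x v : Fin p → ℝ} {g : Fin q → ℝ} (hf : ∀ j, DifferentiableAt ℝ (fun z => f z j) x)
    (hg : ∀ j, fderiv ℝ (fun z => f z j) x v = g j) :
    fderiv ℝ (fun z => dotProduct a (f z)) x v = dotProduct a g := by
  unfold dotProduct
  rw [fderiv_fun_sum (fun j _ => (hf j).const_mul (a j))]
  simp only [sum_apply]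
  refine Finset.sum_congr rfl fun j _ => ?_
  rw [fderiv_const_mul (hf j)]
  simp [hg j]

section Derivatives

variable (n : ℕ → ℕ) (A : ∀ l : ℕ, Fin (n (l + 1)) → Fin (n l) → ℝ)
  (b : ∀ l : ℕ, Fin (n (l + 1)) → ℝ)

lemma tanhHidden_succ (x : Fin (n 0) → ℝ) (l : ℕ) (i : Fin (n (l + 1))) :
    tanhHidden n A b x (l + 1) i
      = Real.tanh (dotProduct (A l i) (tanhHidden n A b x l) + b l i) := rfl

lemma tanhHidden_fderiv (v : Fin (n 0) → ℝ) (l : ℕ) : ∀ (i : Fin (n l)) (x : Fin (n 0) → ℝ),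
    DifferentiableAt ℝ (fun z => tanhHidden n A b z l i) x ∧
      fderiv ℝ (fun z => tanhHidden n A b z l i) x v = hiddenDeriv n A b x v l i := by
  induction l with
  | zero =>
    intro i x
    have h : HasFDerivAt (fun z : Fin (n 0) → ℝ => z i)
        (ContinuousLinearMap.proj (R := ℝ) (φ := fun _ : Fin (n 0) => ℝ) i) x :=
      hasFDerivAt_apply i x
    refine ⟨h.differentiableAt, ?_⟩
    change fderiv ℝ (fun z : Fin (n 0) → ℝ => z i) x v = v i
    rw [h.fderiv]; rfl
  | succ l ih =>
    intro i x
    have hd := differentiableAt_dotProduct (A l i) (fun j => (ih j x).1)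
    have hv := fderiv_dotProduct_apply (A l i) (fun j => (ih j x).1) (fun j => (ih j x).2)
    have h := (hasDerivAt_tanh' _).comp_hasFDerivAt x (hd.hasFDerivAt.add_const (b l i))
    refine ⟨h.differentiableAt, ?_⟩
    change fderiv ℝ (Real.tanh ∘ fun z =>
      dotProduct (A l i) (tanhHidden n A b z l) + b l i) x v = _
    rw [h.fderiv]
    simp only [smul_apply, smul_eq_mul, hv]
    rfl

lemma hiddenDeriv_fderiv (v w : Fin (n 0) → ℝ) (l : ℕ) :
    ∀ (i : Fin (n l)) (x : Fin (n 0) → ℝ),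
    DifferentiableAt ℝ (fun z => hiddenDeriv n A b z v l i) x ∧
      fderiv ℝ (fun z => hiddenDeriv n A b z v l i) x w = hiddenHess n A b x v w l i := by
  induction l with
  | zero =>
    intro i x
    change DifferentiableAt ℝ (fun _ => v i) x ∧ fderiv ℝ (fun _ => v i) x w = 0
    simp
  | succ l ih =>
    intro i x
    have hd := differentiableAt_dotProduct (A l i) (fun j => (ih j x).1)
    have hv := fderiv_dotProduct_apply (A l i) (fun j => (ih j x).1) (fun j => (ih j x).2)
    obtain ⟨hs, hsw⟩ := tanhHidden_fderiv n A b w (l + 1) i x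
    have h := ((hs.hasFDerivAt.pow 2).const_sub 1).mul hd.hasFDerivAt
    refine ⟨h.differentiableAt, ?_⟩
    change fderiv ℝ ((fun z => 1 - tanhHidden n A b z (l + 1) i ^ 2) * fun z =>
      dotProduct (A l i) (hiddenDeriv n A b z v l)) x w = _
    rw [HasFDerivAt.fderiv h]
    simp only [add_apply, smul_apply, smul_eq_mul,
      neg_apply, hv, hsw, hiddenHess, hiddenDeriv, nsmul_eq_mul]
    push_cast
    ring

lemma tanhNet_hess (L : ℕ) (i : Fin (n (L - 1 + 1))) (v w x : Fin (n 0) → ℝ) :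
    fderiv ℝ (fun y => fderiv ℝ (fun z => tanhNet L n A b z i) y v) x w
      = dotProduct (A (L - 1) i) (hiddenHess n A b x v w (L - 1)) := by
  have h1 : (fun y => fderiv ℝ (fun z => tanhNet L n A b z i) y v)
      = fun y => dotProduct (A (L - 1) i) (hiddenDeriv n A b y v (L - 1)) := by
    funext y
    change fderiv ℝ (fun z =>
      dotProduct (A (L - 1) i) (tanhHidden n A b z (L - 1)) + b (L - 1) i) y v = _
    rw [fderiv_add_const]
    exact fderiv_dotProduct_apply _ (fun j => (tanhHidden_fderiv n A b v _ j y).1)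
      (fun j => (tanhHidden_fderiv n A b v _ j y).2)
  rw [h1]
  exact fderiv_dotProduct_apply _ (fun j => (hiddenDeriv_fderiv n A b v w _ j x).1)
    (fun j => (hiddenDeriv_fderiv n A b v w _ j x).2)

/-- Past an empty layer, the network no longer depends on its input. -/
lemma tanhHidden_const_of_empty {l₀ : ℕ} (h0 : n l₀ = 0) (x y : Fin (n 0) → ℝ) {l : ℕ}
    (hl : l₀ ≤ l) : tanhHidden n A b x l = tanhHidden n A b y l := by
  induction l, hl using Nat.le_induction with
  | base => funext i; exact (Fin.cast h0 i).elim0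
  | succ l _ ih =>
    funext i
    rw [tanhHidden_succ, tanhHidden_succ, ih]

lemma tanhNet_hess_of_empty {L l₀ : ℕ} (h0 : n l₀ = 0) (hl : l₀ ≤ L - 1)
    (i : Fin (n (L - 1 + 1))) (v w x : Fin (n 0) → ℝ) :
    fderiv ℝ (fun y => fderiv ℝ (fun z => tanhNet L n A b z i) y v) x w = 0 := by
  have hc : (fun z => tanhNet L n A b z i) = fun _ => tanhNet L n A b x i := by
    funext z
    simp only [tanhNet]
    rw [tanhHidden_const_of_empty n A b h0 z x hl]
  rw [hc]
  simp

end Derivatives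

/-! ### Bounds for a single affine layer -/

section Layer

variable {q W : ℕ} (hq : q ≤ W) {B : ℝ} (hB : 0 ≤ B)
include hq hB

lemma abs_dotProduct_le {a y : Fin q → ℝ} {Y : ℝ} (hY : 0 ≤ Y) (ha : ∀ j, |a j| ≤ B)
    (hy : ∀ j, |y j| ≤ Y) : |dotProduct a y| ≤ W * (B * Y) := by
  calc |dotProduct a y| ≤ ∑ j, |a j * y j| := Finset.abs_sum_le_sum_abs _ _
    _ ≤ ∑ _j : Fin q, B * Y := Finset.sum_le_sum fun j _ => by
        rw [abs_mul]; exact mul_le_mul (ha j) (hy j) (abs_nonneg _) hB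
    _ = q * (B * Y) := by simp
    _ ≤ W * (B * Y) := by gcongr

lemma abs_dotProduct_sub_le {a a' y y' : Fin q → ℝ} {Y d e : ℝ} (hY : 0 ≤ Y) (hd : 0 ≤ d)
    (he : 0 ≤ e) (ha : ∀ j, |a j| ≤ B) (hy : ∀ j, |y' j| ≤ Y) (hda : ∀ j, |a j - a' j| ≤ d)
    (hdy : ∀ j, |y j - y' j| ≤ e) :
    |dotProduct a y - dotProduct a' y'| ≤ W * (d * Y + B * e) := by
  have h : dotProduct a y - dotProduct a' y'
      = dotProduct (a - a') y' + dotProduct a (y - y') := by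
    simp [sub_dotProduct, dotProduct_sub]
  rw [h]
  have h1 := abs_dotProduct_le hq hd hY hda hy
  have h2 := abs_dotProduct_le hq hB he ha hdy
  calc _ ≤ _ := abs_add_le _ _
    _ ≤ W * (d * Y) + W * (B * e) := add_le_add h1 h2
    _ = _ := by ring

end Layer

/-! ### Bounds for a single activation

Throughout, `s` and `t` are values of `tanh`, `P₁, P₂` first derivatives and `Q` second derivatives
of the preactivation. -/

lemma abs_one_sub_sq_le {s : ℝ} (hs : |s| ≤ 1) : |1 - s ^ 2| ≤ 1 := by
  have := abs_le.mp hs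
  rw [abs_le]; constructor <;> nlinarith

/-- The bound `|tanh''| ≤ 1`; the sharp constant is `4 / (3 √3)`. -/
lemma abs_tanh_second_le {s : ℝ} (hs : |s| ≤ 1) : |-2 * s * (1 - s ^ 2)| ≤ 1 := by
  obtain ⟨h1, h2⟩ := abs_le.mp hs
  rw [abs_le]
  -- `1 - 2s(1 - s²) = 2(1 + s)(s - 1/2)² + (1 - s)/2`, and the same with `-s` for `s`
  constructor
  · nlinarith [mul_nonneg (by linarith : (0:ℝ) ≤ 1 + s) (sq_nonneg (s - 1 / 2))]
  · nlinarith [mul_nonneg (by linarith : (0:ℝ) ≤ 1 - s) (sq_nonneg (s + 1 / 2))]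

lemma abs_one_sub_sq_sub_le {s t e : ℝ} (hs : |s| ≤ 1) (ht : |t| ≤ 1) (h : |s - t| ≤ e) :
    |(1 - s ^ 2) - (1 - t ^ 2)| ≤ 2 * e := by
  have e1 : (1 - s ^ 2) - (1 - t ^ 2) = -((s + t) * (s - t)) := by ring
  rw [e1, abs_neg, abs_mul]
  have : |s + t| ≤ 2 := (abs_add_le s t).trans (by linarith)
  exact mul_le_mul this h (abs_nonneg _) (by norm_num)

lemma abs_tanh_second_sub_le {s t e : ℝ} (hs : |s| ≤ 1) (ht : |t| ≤ 1) (h : |s - t| ≤ e) :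
    |-2 * s * (1 - s ^ 2) - -2 * t * (1 - t ^ 2)| ≤ 4 * e := by
  have e1 : -2 * s * (1 - s ^ 2) - -2 * t * (1 - t ^ 2)
      = (2 * (s ^ 2 + s * t + t ^ 2) - 2) * (s - t) := by ring
  rw [e1, abs_mul]
  obtain ⟨h1, h2⟩ := abs_le.mp hs
  obtain ⟨h3, h4⟩ := abs_le.mp ht
  have : |2 * (s ^ 2 + s * t + t ^ 2) - 2| ≤ 4 := by
    rw [abs_le]; constructor <;> nlinarith [sq_nonneg (s + t), sq_nonneg (s - t)]
  exact mul_le_mul this h (abs_nonneg _) (by norm_num)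

lemma abs_mul_sub_mul_le {a a' c c' α γ δa δc : ℝ} (ha : |a| ≤ α) (hc' : |c'| ≤ γ)
    (hda : |a - a'| ≤ δa) (hdc : |c - c'| ≤ δc) :
    |a * c - a' * c'| ≤ δa * γ + α * δc := by
  have e1 : a * c - a' * c' = (a - a') * c' + a * (c - c') := by ring
  rw [e1]
  refine (abs_add_le _ _).trans (add_le_add ?_ ?_) <;> rw [abs_mul]
  · exact mul_le_mul hda hc' (abs_nonneg _) ((abs_nonneg _).trans hda)
  · exact mul_le_mul ha hdc (abs_nonneg _) ((abs_nonneg _).trans ha)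

lemma activation_deriv_sub_le {s t P P' e p δ : ℝ} (hs : |s| ≤ 1) (ht : |t| ≤ 1)
    (he : |s - t| ≤ e) (hP' : |P'| ≤ p) (hd : |P - P'| ≤ δ) :
    |(1 - s ^ 2) * P - (1 - t ^ 2) * P'| ≤ 2 * e * p + δ := by
  have := abs_mul_sub_mul_le (abs_one_sub_sq_le hs) hP' (abs_one_sub_sq_sub_le hs ht he) hd
  linarith

lemma activation_hess_sub_le {s t P₁ P₁' P₂ P₂' Q Q' e p δ r η : ℝ}
    (hs : |s| ≤ 1) (ht : |t| ≤ 1) (he : |s - t| ≤ e)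
    (hP₁ : |P₁| ≤ p) (hP₁' : |P₁'| ≤ p) (hP₂' : |P₂'| ≤ p) (hQ' : |Q'| ≤ r)
    (hd₁ : |P₁ - P₁'| ≤ δ) (hd₂ : |P₂ - P₂'| ≤ δ) (hη : |Q - Q'| ≤ η) :
    |(-2 * s * (1 - s ^ 2) * P₁ * P₂ + (1 - s ^ 2) * Q)
        - (-2 * t * (1 - t ^ 2) * P₁' * P₂' + (1 - t ^ 2) * Q')|
      ≤ 4 * e * p ^ 2 + 2 * p * δ + 2 * e * r + η := by
  have h1 := abs_mul_sub_mul_le (abs_tanh_second_le hs) hP₁' (abs_tanh_second_sub_le hs ht he) hd₁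
  have h2 : |-2 * s * (1 - s ^ 2) * P₁| ≤ p := by
    rw [abs_mul]
    calc _ ≤ 1 * p := mul_le_mul (abs_tanh_second_le hs) hP₁ (abs_nonneg _) zero_le_one
      _ = p := one_mul p
  have h3 := abs_mul_sub_mul_le h2 hP₂' h1 hd₂
  have h4 := activation_deriv_sub_le hs ht he hQ' hη
  calc _ = |(-2 * s * (1 - s ^ 2) * P₁ * P₂ - -2 * t * (1 - t ^ 2) * P₁' * P₂')
        + ((1 - s ^ 2) * Q - (1 - t ^ 2) * Q')| := by congr 1; ring
    _ ≤ _ := abs_add_le _ _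
    _ ≤ _ := add_le_add h3 h4
    _ = _ := by ring

/-! ### Bounds for one network -/

section Network

variable {L : ℕ} {n : ℕ → ℕ} {W : ℕ} (hW : ∀ l, l ≤ L → n l ≤ W) (hW1 : (1 : ℝ) ≤ W)
  {A : ∀ l : ℕ, Fin (n (l + 1)) → Fin (n l) → ℝ} {b : ∀ l : ℕ, Fin (n (l + 1)) → ℝ}
  {B : ℝ} (hB1 : 1 ≤ B) (hA : ∀ l : ℕ, l < L → ∀ i j, |A l i j| ≤ B)

lemma abs_tanhHidden_le {x : Fin (n 0) → ℝ} (hx : ∀ k, |x k| ≤ 1) :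
    ∀ (l : ℕ) (i : Fin (n l)), |tanhHidden n A b x l i| ≤ 1
  | 0, i => hx i
  | _ + 1, _ => (Real.abs_tanh_lt_one _).le

include hW hB1 hA

lemma abs_preDeriv_le {x : Fin (n 0) → ℝ} (hx : ∀ k, |x k| ≤ 1) (m : Fin (n 0)) (l : ℕ)
    (hl : l < L) : ∀ i, |dotProduct (A l i) (hiddenDeriv n A b x (Pi.single m 1) l)|
      ≤ (W : ℝ) ^ l * B ^ (l + 1) := by
  induction l with
  | zero =>
    intro i
    change |dotProduct (A 0 i) (Pi.single m 1)| ≤ _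
    simpa using hA 0 hl i m
  | succ l ih =>
    intro i
    have h := abs_dotProduct_le (hW (l + 1) hl.le) (by linarith) (Y := (W : ℝ) ^ l * B ^ (l + 1))
      (by positivity) (hA (l + 1) hl i)
      (y := hiddenDeriv n A b x (Pi.single m 1) (l + 1)) (fun j => by
        simp only [hiddenDeriv]
        rw [abs_mul]
        calc _ ≤ 1 * _ := mul_le_mul (abs_one_sub_sq_le (abs_tanhHidden_le hx _ _))
              (ih (by omega) j) (abs_nonneg _) zero_le_one
          _ = _ := one_mul _)
    calc _ ≤ _ := h
      _ = _ := by ring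

include hW1

lemma abs_hiddenHess_succ_le {x : Fin (n 0) → ℝ} (hx : ∀ k, |x k| ≤ 1) (k m : Fin (n 0)) (l : ℕ)
    (hl : l < L)
    (hQ : ∀ i, |dotProduct (A l i) (hiddenHess n A b x (Pi.single m 1) (Pi.single k 1) l)|
      ≤ l * (W : ℝ) ^ (2 * l) * B ^ (2 * l + 1)) (j : Fin (n (l + 1))) :
    |hiddenHess n A b x (Pi.single m 1) (Pi.single k 1) (l + 1) j|
      ≤ (l + 1) * (W : ℝ) ^ (2 * l) * B ^ (2 * l + 2) := by
  have hs := abs_tanhHidden_le (A := A) (b := b) hx (l + 1) j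
  have h1 := abs_preDeriv_le (b := b) hW hB1 hA hx m l hl j
  have h2 := abs_preDeriv_le (b := b) hW hB1 hA hx k l hl j
  simp only [hiddenHess]
  have hp : 0 ≤ (W : ℝ) ^ l * B ^ (l + 1) := by positivity
  refine (abs_add_le _ _).trans ?_
  rw [abs_mul, abs_mul, abs_mul (1 - _)]
  calc _ ≤ 1 * ((W : ℝ) ^ l * B ^ (l + 1)) * ((W : ℝ) ^ l * B ^ (l + 1))
        + 1 * (l * (W : ℝ) ^ (2 * l) * B ^ (2 * l + 1)) := by
        refine add_le_add (mul_le_mul (mul_le_mul (abs_tanh_second_le hs) h1 (abs_nonneg _)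
          zero_le_one) h2 (abs_nonneg _) (by positivity))
          (mul_le_mul (abs_one_sub_sq_le hs) (hQ j) (abs_nonneg _) zero_le_one)
    _ ≤ 1 * ((W : ℝ) ^ l * B ^ (l + 1)) * ((W : ℝ) ^ l * B ^ (l + 1))
        + 1 * (l * (W : ℝ) ^ (2 * l) * B ^ (2 * l + 2)) := by
        gcongr <;> first | assumption | omega
    _ = _ := by ring

lemma abs_preHess_le {x : Fin (n 0) → ℝ} (hx : ∀ k, |x k| ≤ 1) (k m : Fin (n 0)) (l : ℕ)
    (hl : l < L) :
    ∀ i, |dotProduct (A l i) (hiddenHess n A b x (Pi.single m 1) (Pi.single k 1) l)|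
      ≤ l * (W : ℝ) ^ (2 * l) * B ^ (2 * l + 1) := by
  induction l with
  | zero => intro i; simp [hiddenHess]
  | succ l ih =>
    intro i
    have h := abs_dotProduct_le (hW (l + 1) hl.le) (by linarith)
      (Y := (l + 1) * (W : ℝ) ^ (2 * l) * B ^ (2 * l + 2)) (by positivity) (hA (l + 1) hl i)
      (abs_hiddenHess_succ_le (b := b) hW hW1 hB1 hA hx k m l (by omega) (ih (by omega)))
    calc _ ≤ _ := h
      _ = (l + 1) * (W : ℝ) ^ (2 * l + 1) * B ^ (2 * l + 3) := by ring
      _ ≤ (l + 1) * (W : ℝ) ^ (2 * l + 2) * B ^ (2 * l + 3) := by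
        gcongr <;> first | assumption | omega
      _ = _ := by push_cast; ring

end Network

/-! ### Comparing two networks -/

section Comparison

variable {L : ℕ} {n : ℕ → ℕ} {W : ℕ} (hW : ∀ l, l ≤ L → n l ≤ W) (hW1 : (1 : ℝ) ≤ W)
  {A A' : ∀ l : ℕ, Fin (n (l + 1)) → Fin (n l) → ℝ} {b b' : ∀ l : ℕ, Fin (n (l + 1)) → ℝ}
  {B : ℝ} (hB1 : 1 ≤ B) (hA : ∀ l : ℕ, l < L → ∀ i j, |A l i j| ≤ B)
  (hA' : ∀ l : ℕ, l < L → ∀ i j, |A' l i j| ≤ B)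
  {d : ℝ} (hd : 0 ≤ d) (hdA : ∀ l : ℕ, l < L → ∀ i j, |A l i j - A' l i j| ≤ d)
  (hdb : ∀ l : ℕ, l < L → ∀ i, |b l i - b' l i| ≤ d)
  {x : Fin (n 0) → ℝ} (hx : ∀ k, |x k| ≤ 1)

include hW hW1 hB1 hA hd hdA hdb hx

lemma abs_tanhHidden_sub_le (l : ℕ) (hl : l < L) :
    ∀ i, |tanhHidden n A b x (l + 1) i - tanhHidden n A' b' x (l + 1) i|
      ≤ 2 * (l + 1) * (W : ℝ) ^ (l + 1) * B ^ l * d := by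
  -- an error `e` in layer `l` gives an error `W (d + B e) + d` in the next one
  have key : ∀ l, l < L → ∀ e : ℝ, 0 ≤ e →
      (∀ j, |tanhHidden n A b x l j - tanhHidden n A' b' x l j| ≤ e) →
      ∀ i, |tanhHidden n A b x (l + 1) i - tanhHidden n A' b' x (l + 1) i|
        ≤ W * (d + B * e) + d := by
    intro l hl e he h i
    rw [tanhHidden_succ, tanhHidden_succ]
    refine (abs_tanh_sub_le _ _).trans ?_
    have h1 := abs_dotProduct_sub_le (hW l hl.le) (by linarith) zero_le_one hd he (hA l hl i)
      (abs_tanhHidden_le (A := A') (b := b') hx l) (hdA l hl i) h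
    rw [mul_one] at h1
    rw [add_sub_add_comm]
    exact (abs_add_le _ _).trans (add_le_add h1 (hdb l hl i))
  induction l with
  | zero =>
    intro i
    refine (key 0 hl 0 le_rfl (fun j => by simp [tanhHidden]) i).trans ?_
    push_cast
    nlinarith
  | succ l ih =>
    intro i
    refine (key (l + 1) hl _ (by positivity) (ih (by omega)) i).trans ?_
    have hu : (1 : ℝ) ≤ (W : ℝ) ^ (l + 1) := one_le_pow₀ hW1
    have hv : (1 : ℝ) ≤ B ^ (l + 1) := one_le_pow₀ hB1
    have h1 : (W : ℝ) * d ≤ (W : ℝ) ^ (l + 2) * B ^ (l + 1) * d := by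
      calc (W : ℝ) * d = 1 * W * 1 * d := by ring
        _ ≤ (W : ℝ) ^ (l + 1) * W * B ^ (l + 1) * d := by gcongr
        _ = _ := by ring
    have h2 : d ≤ W * d := le_mul_of_one_le_left hd hW1
    calc _ = W * d + d + 2 * (l + 1) * ((W : ℝ) ^ (l + 2) * B ^ (l + 1) * d) := by ring
      _ ≤ 2 * ((W : ℝ) ^ (l + 2) * B ^ (l + 1) * d)
          + 2 * (l + 1) * ((W : ℝ) ^ (l + 2) * B ^ (l + 1) * d) := by linarith
      _ = _ := by push_cast; ring

include hA'

lemma abs_preDeriv_sub_le (m : Fin (n 0)) (l : ℕ) (hl : l < L) :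
    ∀ i, |dotProduct (A l i) (hiddenDeriv n A b x (Pi.single m 1) l)
        - dotProduct (A' l i) (hiddenDeriv n A' b' x (Pi.single m 1) l)|
      ≤ 2 * (l + 1) ^ 2 * (W : ℝ) ^ (2 * l) * B ^ (2 * l) * d := by
  induction l with
  | zero =>
    intro i
    change |dotProduct (A 0 i) (Pi.single m 1) - dotProduct (A' 0 i) (Pi.single m 1)| ≤ _
    simp only [dotProduct_single, mul_one]
    refine (hdA 0 hl i m).trans ?_
    push_cast
    nlinarith
  | succ l ih =>
    intro i
    have hl' : l < L := by omega
    have hB0 : 0 ≤ B := by linarith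
    have h := abs_dotProduct_sub_le (hW (l + 1) hl.le) hB0
      (Y := (W : ℝ) ^ l * B ^ (l + 1)) (by positivity) hd
      (e := 2 * (2 * (l + 1) * (W : ℝ) ^ (l + 1) * B ^ l * d) * ((W : ℝ) ^ l * B ^ (l + 1))
        + 2 * (l + 1) ^ 2 * (W : ℝ) ^ (2 * l) * B ^ (2 * l) * d) (by positivity)
      (hA (l + 1) hl i)
      (y := hiddenDeriv n A b x (Pi.single m 1) (l + 1))
      (y' := hiddenDeriv n A' b' x (Pi.single m 1) (l + 1)) (fun j => by
        simp only [hiddenDeriv]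
        rw [abs_mul]
        calc _ ≤ 1 * _ := mul_le_mul (abs_one_sub_sq_le (abs_tanhHidden_le hx _ _))
              (abs_preDeriv_le hW hB1 hA' hx m l hl' j) (abs_nonneg _) zero_le_one
          _ = _ := one_mul _)
      (hdA (l + 1) hl i)
      (fun j => activation_deriv_sub_le (abs_tanhHidden_le hx (l + 1) j)
        (abs_tanhHidden_le hx (l + 1) j)
        (abs_tanhHidden_sub_le hW hW1 hB1 hA hd hdA hdb hx l hl' j)
        (abs_preDeriv_le hW hB1 hA' hx m l hl' j) (ih hl' j))
    refine h.trans ?_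
    -- every term is a multiple of a monomial dominated by `W^(2l+2) B^(2l+2) d`
    have h1 : (W : ℝ) ^ (l + 1) * B ^ (l + 1) * d ≤ (W : ℝ) ^ (2 * l + 2) * B ^ (2 * l + 2) * d := by
      gcongr <;> first | assumption | omega
    have h2 : (W : ℝ) ^ (2 * l + 1) * B ^ (2 * l + 1) * d
        ≤ (W : ℝ) ^ (2 * l + 2) * B ^ (2 * l + 2) * d := by
      gcongr <;> first | assumption | omega
    set M := (W : ℝ) ^ (2 * l + 2) * B ^ (2 * l + 2) * d with hM
    have hM0 : 0 ≤ M := by positivity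
    calc _ = (W : ℝ) ^ (l + 1) * B ^ (l + 1) * d + 4 * (l + 1) * M
          + 2 * (l + 1) ^ 2 * ((W : ℝ) ^ (2 * l + 1) * B ^ (2 * l + 1) * d) := by
          rw [hM]; ring
      _ ≤ M + 4 * (l + 1) * M + 2 * (l + 1) ^ 2 * M := by gcongr
      _ ≤ 2 * (l + 1 + 1) ^ 2 * M := by nlinarith
      _ = _ := by rw [hM]; push_cast; ring

lemma abs_preHess_sub_le (k m : Fin (n 0)) (l : ℕ) (hl : l < L) :
    ∀ i, |dotProduct (A l i) (hiddenHess n A b x (Pi.single m 1) (Pi.single k 1) l)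
        - dotProduct (A' l i) (hiddenHess n A' b' x (Pi.single m 1) (Pi.single k 1) l)|
      ≤ 4 * (l + 1) ^ 3 * (W : ℝ) ^ (3 * l) * B ^ (3 * l) * d := by
  induction l with
  | zero =>
    intro i
    simp [hiddenHess]
    exact hd
  | succ l ih =>
    intro i
    have hl' : l < L := by omega
    have hB0 : 0 ≤ B := by linarith
    have h := abs_dotProduct_sub_le (hW (l + 1) hl.le) hB0
      (Y := (l + 1) * (W : ℝ) ^ (2 * l) * B ^ (2 * l + 2)) (by positivity) hd
      (e := 4 * (2 * (l + 1) * (W : ℝ) ^ (l + 1) * B ^ l * d) * ((W : ℝ) ^ l * B ^ (l + 1)) ^ 2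
        + 2 * ((W : ℝ) ^ l * B ^ (l + 1)) * (2 * (l + 1) ^ 2 * (W : ℝ) ^ (2 * l) * B ^ (2 * l) * d)
        + 2 * (2 * (l + 1) * (W : ℝ) ^ (l + 1) * B ^ l * d)
          * (l * (W : ℝ) ^ (2 * l) * B ^ (2 * l + 1))
        + 4 * (l + 1) ^ 3 * (W : ℝ) ^ (3 * l) * B ^ (3 * l) * d) (by positivity)
      (hA (l + 1) hl i)
      (y := hiddenHess n A b x (Pi.single m 1) (Pi.single k 1) (l + 1))
      (abs_hiddenHess_succ_le hW hW1 hB1 hA' hx k m l hl'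
        (abs_preHess_le hW hW1 hB1 hA' hx k m l hl'))
      (hdA (l + 1) hl i)
      (fun j => activation_hess_sub_le (abs_tanhHidden_le hx (l + 1) j)
        (abs_tanhHidden_le hx (l + 1) j)
        (abs_tanhHidden_sub_le hW hW1 hB1 hA hd hdA hdb hx l hl' j)
        (abs_preDeriv_le hW hB1 hA hx m l hl' j) (abs_preDeriv_le hW hB1 hA' hx m l hl' j)
        (abs_preDeriv_le hW hB1 hA' hx k l hl' j) (abs_preHess_le hW hW1 hB1 hA' hx k m l hl' j)
        (abs_preDeriv_sub_le hW hW1 hB1 hA hA' hd hdA hdb hx m l hl' j)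
        (abs_preDeriv_sub_le hW hW1 hB1 hA hA' hd hdA hdb hx k l hl' j) (ih hl' j))
    refine h.trans ?_
    -- every term is a multiple of a monomial dominated by `W^(3l+3) B^(3l+3) d`
    have hmono : ∀ p q : ℕ, p ≤ 3 * l + 3 → q ≤ 3 * l + 3 → (W : ℝ) ^ p * B ^ q * d
        ≤ (W : ℝ) ^ (3 * l + 3) * B ^ (3 * l + 3) * d := by
      intro p q hp hq
      gcongr
    have h1 := hmono (2 * l + 1) (2 * l + 2) (by omega) (by omega)
    have h2 := hmono (3 * l + 2) (3 * l + 3) (by omega) (by omega)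
    have h3 := hmono (3 * l + 1) (3 * l + 2) (by omega) (by omega)
    have h4 := hmono (3 * l + 2) (3 * l + 2) (by omega) (by omega)
    have h5 := hmono (3 * l + 1) (3 * l + 1) (by omega) (by omega)
    set M := (W : ℝ) ^ (3 * l + 3) * B ^ (3 * l + 3) * d with hM
    have hM0 : 0 ≤ M := by positivity
    calc _ = (l + 1) * ((W : ℝ) ^ (2 * l + 1) * B ^ (2 * l + 2) * d)
          + 8 * (l + 1) * ((W : ℝ) ^ (3 * l + 2) * B ^ (3 * l + 3) * d)
          + 4 * (l + 1) ^ 2 * ((W : ℝ) ^ (3 * l + 1) * B ^ (3 * l + 2) * d)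
          + 4 * (l + 1) * l * ((W : ℝ) ^ (3 * l + 2) * B ^ (3 * l + 2) * d)
          + 4 * (l + 1) ^ 3 * ((W : ℝ) ^ (3 * l + 1) * B ^ (3 * l + 1) * d) := by ring
      _ ≤ (l + 1) * M + 8 * (l + 1) * M + 4 * (l + 1) ^ 2 * M + 4 * (l + 1) * l * M
          + 4 * (l + 1) ^ 3 * M := by gcongr
      _ = ((l + 1) + 8 * (l + 1) + 4 * (l + 1) ^ 2 + 4 * (l + 1) * l + 4 * (l + 1) ^ 3) * M := by
          ring
      _ ≤ (4 * (l + 1 + 1) ^ 3) * M := by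
          refine mul_le_mul_of_nonneg_right ?_ hM0
          have : (0 : ℝ) ≤ l := l.cast_nonneg
          nlinarith [mul_nonneg this this]
      _ = _ := by rw [hM]; push_cast; ring

end Comparison

/-- Lipschitz dependence of the second derivatives of a tanh network on its
parameters: if two networks with the same architecture (depth `L ≥ 2`, width `W`,
input dimension `n 0 ≤ W`, at most `Nθ` parameters in total) have parameters bounded
by `Bθ ≥ 1` and differing entrywise by at most `d` (so that `|θ - θ̃|_{l^∞} ≤ d`),
then for every `x ∈ [-1,1]^{n 0}` and all coordinates `k, m`,
`|∂² v_θ/∂x_k∂x_m (x) - ∂² v_θ̃/∂x_k∂x_m (x)| ≤ 4 L² Nθ W^(3L-3) Bθ^(3L-3) d`. -/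
theorem tanhNet_hessian_param_lipschitz (L : ℕ) (hL : 2 ≤ L) (n : ℕ → ℕ) (hnL : n L = 1)
    (W : ℕ) (hW : ∀ l : ℕ, 1 ≤ l → l ≤ L → n l ≤ W) (hW0 : n 0 ≤ W)
    (Nθ : ℕ) (hNθ : ∑ l ∈ Finset.range L, (n (l + 1) * n l + n (l + 1)) ≤ Nθ)
    (A A' : ∀ l : ℕ, Fin (n (l + 1)) → Fin (n l) → ℝ)
    (b b' : ∀ l : ℕ, Fin (n (l + 1)) → ℝ) (Bθ : ℝ) (hB1 : 1 ≤ Bθ)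
    (hA : ∀ l : ℕ, l < L → ∀ i j, |A l i j| ≤ Bθ)
    (hb : ∀ l : ℕ, l < L → ∀ i, |b l i| ≤ Bθ)
    (hA' : ∀ l : ℕ, l < L → ∀ i j, |A' l i j| ≤ Bθ)
    (hb' : ∀ l : ℕ, l < L → ∀ i, |b' l i| ≤ Bθ)
    (d : ℝ)
    (hdA : ∀ l : ℕ, l < L → ∀ i j, |A l i j - A' l i j| ≤ d)
    (hdb : ∀ l : ℕ, l < L → ∀ i, |b l i - b' l i| ≤ d) :
    ∀ x : Fin (n 0) → ℝ, (∀ k, x k ∈ Set.Icc (-1 : ℝ) 1) →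
      ∀ (i : Fin (n (L - 1 + 1))) (k m : Fin (n 0)),
        |fderiv ℝ (fun y =>
              fderiv ℝ (fun z => tanhNet L n A b z i) y (Pi.single m 1))
            x (Pi.single k 1) -
          fderiv ℝ (fun y =>
              fderiv ℝ (fun z => tanhNet L n A' b' z i) y (Pi.single m 1))
            x (Pi.single k 1)| ≤
          4 * (L : ℝ) ^ 2 * (Nθ : ℝ) * (W : ℝ) ^ (3 * L - 3) * Bθ ^ (3 * L - 3) * d := by
  intro x hx i k m
  have hx' : ∀ k, |x k| ≤ 1 := fun k => abs_le.mpr (hx k)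
  have hd : 0 ≤ d := (abs_nonneg _).trans (hdb (L - 1) (by omega) i)
  have hW' : ∀ l, l ≤ L → n l ≤ W := by
    intro l hl
    rcases Nat.eq_zero_or_pos l with rfl | h
    · exact hW0
    · exact hW l h hl
  have hW1 : (1 : ℝ) ≤ W := by
    have := hW L (by omega) le_rfl
    rw [hnL] at this
    exact_mod_cast this
  by_cases hempty : ∃ l₀, l₀ ≤ L - 1 ∧ n l₀ = 0
  · obtain ⟨l₀, hl₀, h0⟩ := hempty
    rw [tanhNet_hess_of_empty n A b h0 hl₀, tanhNet_hess_of_empty n A' b' h0 hl₀]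
    simp only [sub_self, abs_zero]
    positivity
  · push Not at hempty
    -- each layer contributes at least one bias
    have hLN : L ≤ Nθ := by
      refine le_trans ?_ hNθ
      calc L = ∑ _l ∈ Finset.range L, 1 := by simp
        _ ≤ _ := Finset.sum_le_sum fun l hl => by
          have hl := Finset.mem_range.mp hl
          have : n (l + 1) ≠ 0 := by
            rcases Nat.lt_or_ge l (L - 1) with h | h
            · exact hempty (l + 1) h
            · rw [show l + 1 = L by omega, hnL]; exact one_ne_zero
          omega
    rw [tanhNet_hess, tanhNet_hess]
    have h := abs_preHess_sub_le hW' hW1 hB1 hA hA' hd hdA hdb hx' k m (L - 1) (by omega) i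
    have e1 : ((L - 1 : ℕ) : ℝ) + 1 = L := by
      rw [← Nat.cast_add_one, Nat.sub_add_cancel (by omega)]
    have e2 : 3 * (L - 1) = 3 * L - 3 := by omega
    rw [e1, e2] at h
    refine h.trans ?_
    have hLN' : (L : ℝ) ≤ Nθ := by exact_mod_cast hLN
    calc _ = 4 * (L : ℝ) ^ 2 * L * (W : ℝ) ^ (3 * L - 3) * Bθ ^ (3 * L - 3) * d := by ring
      _ ≤ _ := by gcongr
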